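/- arXiv:2101.06818 — 4 statements merged into one kernel-verified Lean document; each statement's English description precedes it below -/
import Mathlib

section
/- For all natural numbers n and k with 0 ≤ k < n, the supremum over x ∈ [-1, 1] of |x^n - φ_k(x)| equals p_{n,k} = 2^{1-n} Σ_{j=⌊(n+k)/2⌋+1}^{n} C(n, j). (This is the paper's main theorem: the truncation error of the Chebyshev expansion of x^n equals p_{n,k} exactly in the supremum norm on [-1,1].) -/
open Finset Polynomial

/-- Chebyshev coefficients of the monomial `x ^ n`. -/
noncomputable def chebCoeff (n j : ℕ) : ℝ :=
  if (n - j) % 2 = 0 then (2 : ℝ) ^ (1 - (n : ℤ)) * (n.choose ((n - j) / 2) : ℝ) else 0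

/-- The truncated Chebyshev approximant `φ_k(x) = Σ'_{j=0}^{k} c_j T_j(x)`
(the `j = 0` term halved). -/
noncomputable def phi (n k : ℕ) (x : ℝ) : ℝ :=
  chebCoeff n 0 / 2 * (Polynomial.Chebyshev.T ℝ (0 : ℤ)).eval x +
    ∑ j ∈ Finset.Icc 1 k, chebCoeff n j * (Polynomial.Chebyshev.T ℝ (j : ℤ)).eval x

/-- `p_{n,k} = 2^(1-n) Σ_{j=⌊(n+k)/2⌋+1}^{n} C(n, j)`. -/
noncomputable def pnk (n k : ℕ) : ℝ :=
  (2 : ℝ) ^ (1 - (n : ℤ)) * ∑ j ∈ Finset.Icc ((n + k) / 2 + 1) n, (n.choose j : ℝ)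

/-!
The expansion `(2 x) ^ n = ∑ C(n, i) T_{2 i - n}(x)` comes from iterating
`2 x T_m = T_{m-1} + T_{m+1}` from `T_0 = 1`. Folding it with `T_{-m} = T_m` shows that
`φ_n(x) = x ^ n`, so that `x ^ n - φ_k(x)` is the tail `∑_{k < j ≤ n} c_j T_j(x)`. As `c_j ≥ 0` and
`|T_j| ≤ 1 = T_j(1)` on `[-1, 1]`, its modulus is largest at `x = 1`, where it is
`∑_{k < j ≤ n} c_j = p_{n,k}`.
-/

lemma pow_mul_eq_sum_choose_mul_of_recurrence {R : Type*} [Semiring R] {a : R} {f : ℤ → R}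
    (hf : ∀ m, a * f m = f (m - 1) + f (m + 1)) (n : ℕ) (m : ℤ) :
    a ^ n * f m = ∑ i ∈ range (n + 1), (n.choose i : R) * f (m + 2 * i - n) := by
  induction n generalizing m with
  | zero => simp
  | succ n ih =>
    rw [sum_choose_succ_mul fun i _ ↦ f (m + 2 * i - (n + 1 : ℕ)), pow_succ, mul_assoc, hf, mul_add,
      ih, ih]
    congr! 4 <;> push_cast <;> ring_nf

lemma sum_range_succ_eq_of_symm {M : Type*} [AddCommMonoid M] {f : ℕ → M} {n : ℕ}
    (hf : ∀ i ≤ n, f (n - i) = f i) :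
    ∑ i ∈ range (n + 1), f i =
      (if Even n then f (n / 2) else 0) + 2 • ∑ i ∈ Icc (n / 2 + 1) n, f i := by
  have lower : ∑ i ∈ range (n + 1) with 2 * i < n, f i = ∑ i ∈ Icc (n / 2 + 1) n, f i :=
    sum_nbij' (n - ·) (n - ·) (by grind) (by grind) (by grind) (by grind) (by grind)
  have upper : ∑ i ∈ range (n + 1) with ¬ 2 * i < n, f i =
      (if Even n then f (n / 2) else 0) + ∑ i ∈ Icc (n / 2 + 1) n, f i := by
    split_ifs with hn
    · rw [show {i ∈ range (n + 1) | ¬ 2 * i < n} = insert (n / 2) (Icc (n / 2 + 1) n) by grind,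
        sum_insert (by simp)]
    · rw [show {i ∈ range (n + 1) | ¬ 2 * i < n} = Icc (n / 2 + 1) n by grind, zero_add]
  rw [← sum_filter_add_sum_filter_not _ (2 * · < n), lower, upper, two_nsmul, add_left_comm]

lemma two_mul_pow_eq_sum_choose_mul_eval_T {R : Type*} [CommRing R] (x : R) (n : ℕ) :
    (2 * x) ^ n = ∑ i ∈ range (n + 1), (n.choose i : R) * (Chebyshev.T R (2 * i - n)).eval x := by
  simpa using pow_mul_eq_sum_choose_mul_of_recurrence (a := 2 * x)
    (f := fun m ↦ (Chebyshev.T R m).eval x) (fun m ↦ by simp [Chebyshev.T_sub_one]) n 0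

lemma two_mul_pow_eq_add_two_mul_sum {R : Type*} [CommRing R] (x : R) (n : ℕ) :
    (2 * x) ^ n = (if Even n then (n.choose (n / 2) : R) else 0) +
      2 * ∑ i ∈ Icc (n / 2 + 1) n, (n.choose i : R) * (Chebyshev.T R (2 * i - n)).eval x := by
  have symm (i : ℕ) (hi : i ≤ n) :
      (n.choose (n - i) : R) * (Chebyshev.T R (2 * (n - i : ℕ) - n)).eval x =
        n.choose i * (Chebyshev.T R (2 * i - n)).eval x := by
    rw [Nat.choose_symm hi, ← Chebyshev.T_neg R (2 * i - n)]
    congr 3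
    lia
  rw [two_mul_pow_eq_sum_choose_mul_eval_T, sum_range_succ_eq_of_symm symm, nsmul_eq_mul,
    Nat.cast_ofNat]
  congr 1
  split_ifs with hn
  · rw [show 2 * ((n / 2 : ℕ) : ℤ) - n = 0 by grind]
    simp
  · rfl

lemma iSup_abs_sum_mul_eval_T {ι : Type*} {s : Finset ι} {c : ι → ℝ} (m : ι → ℤ)
    (hc : ∀ i ∈ s, 0 ≤ c i) :
    ⨆ x : Set.Icc (-1 : ℝ) 1, |∑ i ∈ s, c i * (Chebyshev.T ℝ (m i)).eval (x : ℝ)| =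
      ∑ i ∈ s, c i := by
  refine IsGreatest.csSup_eq ⟨⟨⟨1, by simp⟩, by simp [abs_of_nonneg (sum_nonneg hc)]⟩, ?_⟩
  rintro _ ⟨⟨x, hx⟩, rfl⟩
  refine (abs_sum_le_sum_abs _ _).trans (sum_le_sum fun i hi ↦ ?_)
  rw [abs_mul, abs_of_nonneg (hc i hi)]
  exact mul_le_of_le_one_right (hc i hi) (Chebyshev.abs_eval_T_real_le_one _ (abs_le.2 hx))

lemma chebCoeff_nonneg (n j : ℕ) : 0 ≤ chebCoeff n j := by
  unfold chebCoeff
  positivity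

lemma chebCoeff_zero_right (n : ℕ) :
    chebCoeff n 0 = 2 ^ (1 - (n : ℤ)) * if Even n then (n.choose (n / 2) : ℝ) else 0 := by
  simp [chebCoeff, Nat.even_iff]

-- The coefficient `c_j` is nonzero only for `j = 2 i - n`, and then `C(n, (n - j) / 2) = C(n, i)`.
lemma sum_Ioc_chebCoeff_mul (n k : ℕ) (f : ℤ → ℝ) :
    ∑ j ∈ Ioc k n, chebCoeff n j * f j =
      2 ^ (1 - (n : ℤ)) * ∑ i ∈ Icc ((n + k) / 2 + 1) n, (n.choose i : ℝ) * f (2 * i - n) := by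
  simp only [chebCoeff, ite_mul, zero_mul, ← sum_filter, mul_sum, mul_assoc]
  refine sum_nbij' (fun j ↦ (n + j) / 2) (fun i ↦ 2 * i - n) (by grind) (by grind) (by grind)
    (by grind) fun j hj ↦ ?_
  obtain ⟨hjn, hpar⟩ : j ≤ n ∧ (n - j) % 2 = 0 := by grind
  rw [show (n - j) / 2 = n - (n + j) / 2 by lia, Nat.choose_symm (by lia),
    show 2 * (((n + j) / 2 : ℕ) : ℤ) - n = j by lia]

lemma pnk_eq_sum_chebCoeff (n k : ℕ) : pnk n k = ∑ j ∈ Ioc k n, chebCoeff n j := by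
  simpa [pnk] using (sum_Ioc_chebCoeff_mul n k 1).symm

lemma phi_eq_add_sum_Ioc (n k : ℕ) (x : ℝ) :
    phi n k x =
      chebCoeff n 0 / 2 + ∑ j ∈ Ioc 0 k, chebCoeff n j * (Chebyshev.T ℝ j).eval x := by
  simp [phi, ← Icc_add_one_left_eq_Ioc]

lemma phi_self (n : ℕ) (x : ℝ) : phi n n x = x ^ n := by
  have scale : (2 : ℝ) ^ (1 - (n : ℤ)) * 2 ^ n = 2 := by
    rw [zpow_one_sub_natCast₀ two_ne_zero, div_mul_cancel₀ _ (by positivity)]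
  have expansion := two_mul_pow_eq_add_two_mul_sum x n
  rw [mul_pow] at expansion
  rw [phi_eq_add_sum_Ioc, chebCoeff_zero_right,
    sum_Ioc_chebCoeff_mul n 0 fun m ↦ (Chebyshev.T ℝ m).eval x, add_zero]
  linear_combination x ^ n / 2 * scale - 2 ^ (1 - (n : ℤ)) / 2 * expansion

lemma pow_sub_phi {n k : ℕ} (hk : k ≤ n) (x : ℝ) :
    x ^ n - phi n k x = ∑ j ∈ Ioc k n, chebCoeff n j * (Chebyshev.T ℝ j).eval x := by
  rw [← phi_self, phi_eq_add_sum_Ioc, phi_eq_add_sum_Ioc, add_sub_add_left_eq_sub,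
    ← sum_Ioc_consecutive _ (Nat.zero_le k) hk, add_sub_cancel_left]

/-- Main theorem: for `0 ≤ k < n`, the supremum over `x ∈ [-1, 1]` of `|x^n - φ_k(x)|`
equals `p_{n,k}`. -/
theorem sup_abs_monomial_sub_phi (n k : ℕ) (hk : k < n) :
    ⨆ x : Set.Icc (-1 : ℝ) 1, |(x : ℝ) ^ n - phi n k x| = pnk n k := by
  simp_rw [pow_sub_phi hk.le, pnk_eq_sum_chebCoeff]
  exact iSup_abs_sum_mul_eval_T _ fun j _ ↦ chebCoeff_nonneg n j
end

section
/- For all natural numbers n ≥ 1 and k with 0 ≤ k ≤ n/2, the lower partial sum of binomial coefficients satisfies Σ_{j=0}^{k} C(n, j) ≤ 2^n exp(-(n - 2k)²/(2n)). -/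
open Finset

/-! This is the Chernoff bound for a sum `X` of `n` independent fair signs, as `n.choose j / 2 ^ n`
is the probability that `X = n - 2 * j`. Exponential weights bound the tail `a ≤ X` by
`exp (-(t * a)) * cosh t ^ n`, hence by `exp (n * (t ^ 2 / 2) - t * a)`, since
`cosh t ≤ exp (t ^ 2 / 2)`. The choice `t = a / n` minimises the exponent. -/

theorem sum_filter_le_exp_neg_mul_sum_mul_exp {ι : Type*} {s : Finset ι} {w f : ι → ℝ} {t : ℝ}
    (hw : ∀ i ∈ s, 0 ≤ w i) (ht : 0 ≤ t) (a : ℝ) :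
    ∑ i ∈ s with a ≤ f i, w i ≤ Real.exp (-(t * a)) * ∑ i ∈ s, w i * Real.exp (t * f i) := by
  rw [mul_sum, sum_filter]
  refine sum_le_sum fun i hi ↦ ?_
  have hwi := hw i hi
  split_ifs with hai
  · calc
      w i ≤ w i * Real.exp (t * f i - t * a) :=
        le_mul_of_one_le_right hwi <| Real.one_le_exp <| sub_nonneg.2 <| by gcongr
      _ = Real.exp (-(t * a)) * (w i * Real.exp (t * f i)) := by
        rw [sub_eq_neg_add, Real.exp_add, mul_left_comm]
  · positivity

theorem sum_range_choose_mul_exp (n : ℕ) (t : ℝ) :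
    ∑ j ∈ range (n + 1), (n.choose j : ℝ) * Real.exp (t * (n - 2 * j)) =
      (2 * Real.cosh t) ^ n := by
  have two_mul_cosh : 2 * Real.cosh t = Real.exp (-t) + Real.exp t := by
    rw [Real.cosh_eq]; ring
  rw [two_mul_cosh, add_pow]
  refine sum_congr rfl fun j hj ↦ ?_
  have hjn : j ≤ n := mem_range_succ_iff.1 hj
  rw [← Real.exp_nat_mul, ← Real.exp_nat_mul, ← Real.exp_add, mul_comm, Nat.cast_sub hjn]
  ring_nf

theorem sum_filter_choose_le_two_pow_mul_exp (n : ℕ) (a : ℝ) {t : ℝ} (ht : 0 ≤ t) :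
    ∑ j ∈ range (n + 1) with a ≤ n - 2 * ((j : ℕ) : ℝ), (n.choose j : ℝ) ≤
      2 ^ n * Real.exp (n * (t ^ 2 / 2) - t * a) := by
  calc
    _ ≤ Real.exp (-(t * a)) *
          ∑ j ∈ range (n + 1), (n.choose j : ℝ) * Real.exp (t * (n - 2 * j)) :=
      sum_filter_le_exp_neg_mul_sum_mul_exp (fun j _ ↦ (n.choose j).cast_nonneg) ht a
    _ = Real.exp (-(t * a)) * (2 * Real.cosh t) ^ n := by rw [sum_range_choose_mul_exp]
    _ ≤ Real.exp (-(t * a)) * (2 * Real.exp (t ^ 2 / 2)) ^ n := by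
      gcongr
      exact Real.cosh_le_exp_half_sq t
    _ = 2 ^ n * Real.exp (n * (t ^ 2 / 2) - t * a) := by
      rw [mul_pow, ← Real.exp_nat_mul, mul_left_comm, ← Real.exp_add, neg_add_eq_sub]

/-- For `n ≥ 1` and `0 ≤ k ≤ n/2`, the lower partial sum of binomial coefficients satisfies
`Σ_{j=0}^{k} C(n, j) ≤ 2^n exp(-(n - 2k)²/(2n))`. -/
theorem sum_choose_le (n k : ℕ) (hn : 1 ≤ n) (hk : 2 * k ≤ n) :
    (∑ j ∈ Finset.range (k + 1), (n.choose j : ℝ)) ≤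
      2 ^ n * Real.exp (-((n : ℝ) - 2 * k) ^ 2 / (2 * n)) := by
  have hn0 : (n : ℝ) ≠ 0 := by positivity
  have ha : (0 : ℝ) ≤ n - 2 * k := sub_nonneg.2 (by exact_mod_cast hk)
  have range_subset_tail : range (k + 1) ⊆
      {j ∈ range (n + 1) | (n : ℝ) - 2 * k ≤ n - 2 * ((j : ℕ) : ℝ)} := by
    intro j hj
    have hjk : j ≤ k := mem_range_succ_iff.1 hj
    exact mem_filter.2 ⟨mem_range.2 (by lia), by gcongr⟩
  calc
    _ ≤ ∑ j ∈ range (n + 1) with (n : ℝ) - 2 * k ≤ n - 2 * ((j : ℕ) : ℝ), (n.choose j : ℝ) :=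
      sum_le_sum_of_subset_of_nonneg range_subset_tail fun j _ _ ↦ (n.choose j).cast_nonneg
    _ ≤ 2 ^ n * Real.exp (n * ((((n : ℝ) - 2 * k) / n) ^ 2 / 2) -
          ((n : ℝ) - 2 * k) / n * (n - 2 * k)) :=
      sum_filter_choose_le_two_pow_mul_exp n _ (div_nonneg ha n.cast_nonneg)
    _ = 2 ^ n * Real.exp (-((n : ℝ) - 2 * k) ^ 2 / (2 * n)) := by
      congr 2
      field_simp
      ring
end

section
/- For every natural number n ≥ 1, every real ε > 0, and every natural number k with k < n and k ≥ √(2 n log(2/ε)), there exists a polynomial p of degree at most k with real coefficients such that |x^n - p(x)| ≤ ε for all x ∈ [-1, 1]. (The truncated Chebyshev approximant φ_k is such a polynomial.) -/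
open Finset Polynomial

/-!
Iterating `2 X T_m = T_{m+1} + T_{m-1}` writes `X ^ n` as the average of `T_{i-j}` over the binomial
distribution of the displacement `i - j` of a simple random walk with `n = i + j` steps. Dropping
the terms with `k < |i - j|` costs at most the probability of that event on `[-1, 1]`, where
`|T_m| ≤ 1`. The same identity at `cosh l`, where `T_m (cosh l) = cosh (m l)`, computes the
exponential moments of the walk, so the Chernoff bound gives the tail estimate
`2 exp (-k² / (2 n))`.
-/

theorem two_mul_X_pow_eq_sum_choose_mul_T (R : Type*) [CommRing R] (n : ℕ) :
    (2 * X : R[X]) ^ n = ∑ ij ∈ antidiagonal n, (n.choose ij.1 : R[X]) *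
      Chebyshev.T R (ij.1 - ij.2) := by
  induction n with
  | zero => simp
  | succ n ih =>
    have two_mul_X_mul_T (m : ℤ) :
        2 * X * Chebyshev.T R m = Chebyshev.T R (m - 1) + Chebyshev.T R (m + 1) := by
      rw [Chebyshev.T_add_one]; ring
    rw [sum_antidiagonal_choose_succ_mul fun i j ↦ Chebyshev.T R (i - j), pow_succ', ih, mul_sum,
      ← sum_add_distrib]
    refine sum_congr rfl fun ij hij ↦ ?_
    rw [Nat.choose_symm_of_eq_add (mem_antidiagonal.mp hij).symm, mul_left_comm, two_mul_X_mul_T,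
      mul_add]
    push_cast
    ring_nf

theorem X_pow_eq_sum_C_choose_div_mul_T (K : Type*) [Field K] [NeZero (2 : K)] (n : ℕ) :
    (X : K[X]) ^ n = ∑ ij ∈ antidiagonal n, C ((n.choose ij.1 : K) / 2 ^ n) *
      Chebyshev.T K (ij.1 - ij.2) := by
  have two_pow_ne_zero : (2 : K) ^ n ≠ 0 := pow_ne_zero n two_ne_zero
  calc (X : K[X]) ^ n = C ((2 : K) ^ n)⁻¹ * (2 * X) ^ n := by
        rw [mul_pow, ← mul_assoc, ← C_ofNat, ← C_pow, ← C_mul, inv_mul_cancel₀ two_pow_ne_zero,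
          C_1, one_mul]
    _ = _ := by
        rw [two_mul_X_pow_eq_sum_choose_mul_T, mul_sum]
        refine sum_congr rfl fun ij _ ↦ ?_
        rw [div_eq_inv_mul, C_mul, C_eq_natCast, mul_assoc]

theorem sum_choose_div_mul_cosh (n : ℕ) (l : ℝ) :
    ∑ ij ∈ antidiagonal n, (n.choose ij.1 : ℝ) / 2 ^ n * Real.cosh ((ij.1 - ij.2) * l) =
      Real.cosh l ^ n := by
  simpa [eval_finsetSum, Chebyshev.T_real_cosh] using
    (congrArg (eval (Real.cosh l)) (X_pow_eq_sum_C_choose_div_mul_T ℝ n)).symm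

theorem one_le_two_mul_exp_neg_mul_cosh {k l m : ℝ} (hl : 0 ≤ l) (hkm : k ≤ |m|) :
    1 ≤ 2 * Real.exp (-(k * l)) * Real.cosh (m * l) := by
  have exp_le_two_mul_cosh : Real.exp (k * l) ≤ 2 * Real.cosh (m * l) := by
    rw [← Real.cosh_abs, abs_mul, abs_of_nonneg hl]
    calc Real.exp (k * l) ≤ Real.exp (|m| * l) := by gcongr
      _ ≤ 2 * Real.cosh (|m| * l) := by
        rw [Real.cosh_eq]; linarith [Real.exp_pos (-(|m| * l))]
  calc 1 = Real.exp (-(k * l)) * Real.exp (k * l) := by simp [← Real.exp_add]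
    _ ≤ Real.exp (-(k * l)) * (2 * Real.cosh (m * l)) := by gcongr
    _ = _ := by ring

theorem sum_choose_div_tail_le_exp (n : ℕ) (k : ℝ) {l : ℝ} (hl : 0 ≤ l) :
    ∑ ij ∈ antidiagonal n with k < |(ij.1 - ij.2 : ℝ)|, (n.choose ij.1 : ℝ) / 2 ^ n ≤
      2 * Real.exp (n * (l ^ 2 / 2) - k * l) := by
  set c : ℝ := 2 * Real.exp (-(k * l))
  calc ∑ ij ∈ antidiagonal n with k < |(ij.1 - ij.2 : ℝ)|, (n.choose ij.1 : ℝ) / 2 ^ n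
      ≤ ∑ ij ∈ antidiagonal n with k < |(ij.1 - ij.2 : ℝ)|,
          (n.choose ij.1 : ℝ) / 2 ^ n * (c * Real.cosh ((ij.1 - ij.2) * l)) :=
        sum_le_sum fun ij hij ↦ le_mul_of_one_le_right (by positivity)
          (one_le_two_mul_exp_neg_mul_cosh hl (mem_filter.mp hij).2.le)
    _ ≤ ∑ ij ∈ antidiagonal n,
          (n.choose ij.1 : ℝ) / 2 ^ n * (c * Real.cosh ((ij.1 - ij.2) * l)) :=
        sum_le_sum_of_subset_of_nonneg (filter_subset _ _) fun ij _ _ ↦ by positivity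
    _ = c * Real.cosh l ^ n := by
        simp only [← sum_choose_div_mul_cosh, mul_sum, mul_left_comm]
    _ ≤ c * Real.exp (l ^ 2 / 2) ^ n := by
        gcongr; exact Real.cosh_le_exp_half_sq l
    _ = 2 * Real.exp (n * (l ^ 2 / 2) - k * l) := by
        rw [← Real.exp_nat_mul, mul_assoc, ← Real.exp_add, neg_add_eq_sub]

theorem sum_choose_div_tail_le_exp_neg_sq {n : ℕ} (hn : n ≠ 0) {k : ℝ} (hk : 0 ≤ k) :
    ∑ ij ∈ antidiagonal n with k < |(ij.1 - ij.2 : ℝ)|, (n.choose ij.1 : ℝ) / 2 ^ n ≤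
      2 * Real.exp (-(k ^ 2 / (2 * n))) := by
  -- `l = k / n` minimises the exponent `n l² / 2 - k l`.
  convert sum_choose_div_tail_le_exp n k (show 0 ≤ k / n by positivity) using 3
  field_simp
  ring

/-- The truncated Chebyshev approximant `φ_k` of `X ^ n`. It is written as a sum over `i + j = n`
in which both `i - j` and `j - i` occur: since `T_{-m} = T_m`, the two terms together carry the
coefficient `2^{1-n} C(n, (n - |i - j|) / 2)`, and the term `T_0`, occurring once, is halved. -/
noncomputable def chebyshevTruncation (n k : ℕ) : ℝ[X] :=
  ∑ ij ∈ antidiagonal n with |(ij.1 - ij.2 : ℝ)| ≤ k,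
    C ((n.choose ij.1 : ℝ) / 2 ^ n) * Chebyshev.T ℝ (ij.1 - ij.2)

theorem degree_chebyshevTruncation_le (n k : ℕ) : (chebyshevTruncation n k).degree ≤ k := by
  refine (degree_sum_le _ _).trans (Finset.sup_le fun ij hij ↦ ?_)
  have natAbs_le : ((ij.1 : ℤ) - ij.2).natAbs ≤ k := by
    rw [← Nat.cast_le (α := ℤ), ← Int.abs_eq_natAbs]
    exact mod_cast (mem_filter.mp hij).2
  rw [C_mul']
  refine (degree_smul_le _ _).trans ?_
  rw [Chebyshev.degree_T]
  exact mod_cast natAbs_le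

theorem X_pow_sub_chebyshevTruncation (n k : ℕ) :
    X ^ n - chebyshevTruncation n k =
      ∑ ij ∈ antidiagonal n with (k : ℝ) < |(ij.1 - ij.2 : ℝ)|,
        C ((n.choose ij.1 : ℝ) / 2 ^ n) * Chebyshev.T ℝ (ij.1 - ij.2) := by
  rw [X_pow_eq_sum_C_choose_div_mul_T, chebyshevTruncation, sub_eq_iff_eq_add']
  simp only [← not_le, sum_filter_add_sum_filter_not]

theorem abs_pow_sub_eval_chebyshevTruncation_le_sum (n k : ℕ) {x : ℝ} (hx : |x| ≤ 1) :
    |x ^ n - (chebyshevTruncation n k).eval x| ≤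
      ∑ ij ∈ antidiagonal n with (k : ℝ) < |(ij.1 - ij.2 : ℝ)|, (n.choose ij.1 : ℝ) / 2 ^ n := by
  rw [← eval_X_pow, ← eval_sub, X_pow_sub_chebyshevTruncation, eval_finsetSum]
  refine abs_sum_le_sum_abs _ _ |>.trans <| sum_le_sum fun ij _ ↦ ?_
  rw [eval_mul, eval_C, abs_mul, abs_of_nonneg (by positivity)]
  exact mul_le_of_le_one_right (by positivity) (Chebyshev.abs_eval_T_real_le_one _ hx)

theorem abs_pow_sub_eval_chebyshevTruncation_le_exp {n : ℕ} (hn : n ≠ 0) (k : ℕ) {x : ℝ}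
    (hx : |x| ≤ 1) :
    |x ^ n - (chebyshevTruncation n k).eval x| ≤ 2 * Real.exp (-((k : ℝ) ^ 2 / (2 * n))) :=
  (abs_pow_sub_eval_chebyshevTruncation_le_sum n k hx).trans
    (sum_choose_div_tail_le_exp_neg_sq hn k.cast_nonneg)

theorem two_mul_exp_neg_sq_div_le {a k ε : ℝ} (ha : 0 < a) (hε : 0 < ε)
    (hk : √(a * Real.log (2 / ε)) ≤ k) : 2 * Real.exp (-(k ^ 2 / a)) ≤ ε := by
  have log_le : Real.log (2 / ε) ≤ k ^ 2 / a :=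
    (le_div_iff₀' ha).mpr (Real.sqrt_le_iff.mp hk).2
  calc 2 * Real.exp (-(k ^ 2 / a)) ≤ 2 * Real.exp (-Real.log (2 / ε)) := by gcongr
    _ = ε := by
      rw [Real.exp_neg, Real.exp_log (by positivity), inv_div, mul_div_cancel₀ ε two_ne_zero]

/-- For every `n ≥ 1`, every `ε > 0`, and every `k < n` with `k ≥ √(2 n log(2/ε))`, there is
a polynomial `p` of degree at most `k` with `|x^n - p(x)| ≤ ε` on `[-1, 1]`. -/
theorem exists_poly_approx_monomial (n : ℕ) (hn : 1 ≤ n) (ε : ℝ) (hε : 0 < ε)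
    (k : ℕ) (hkn : k < n) (hk : Real.sqrt (2 * n * Real.log (2 / ε)) ≤ k) :
    ∃ p : Polynomial ℝ, p.degree ≤ k ∧
      ∀ x ∈ Set.Icc (-1 : ℝ) 1, |x ^ n - p.eval x| ≤ ε := by
  refine ⟨chebyshevTruncation n k, degree_chebyshevTruncation_le n k, fun x hx ↦ ?_⟩
  calc |x ^ n - (chebyshevTruncation n k).eval x|
      ≤ 2 * Real.exp (-((k : ℝ) ^ 2 / (2 * n))) :=
        abs_pow_sub_eval_chebyshevTruncation_le_exp (Nat.one_le_iff_ne_zero.mp hn) k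
          (abs_le.mpr hx)
    _ ≤ ε := two_mul_exp_neg_sq_div_le (by positivity) hε hk
end

section
/- For every natural number n ≥ 1 and every polynomial q of degree at most n - 1 with real coefficients, the supremum over x ∈ [-1, 1] of |x^n - q(x)| is at least 2^{1-n}, and this minimum value 2^{1-n} is attained by the polynomial q*(x) = x^n - 2^{1-n} T_n(x). -/
/-!
Among the polynomials of degree at most `n` bounded by `1` on `[-1, 1]`, the Chebyshev polynomial
`T_n` has the largest `n`-th coefficient, `2 ^ (n - 1)`. Applied to `X ^ n - q` divided by its
supremum norm, this bounds that norm below, and `X ^ n - q` can be the monic multiple of `T_n`.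
-/

open Finset Polynomial

theorem zpow_one_sub_natCast_eq_inv_pow {G : Type*} [DivisionMonoid G] (a : G) {n : ℕ}
    (hn : n ≠ 0) : a ^ (1 - (n : ℤ)) = (a ^ (n - 1))⁻¹ := by
  rw [show 1 - (n : ℤ) = -((n - 1 : ℕ) : ℤ) by omega, zpow_neg, zpow_natCast]

theorem bddAbove_range_abs_eval {K : Set ℝ} (hK : IsCompact K) (P : ℝ[X]) :
    BddAbove (Set.range fun x : K => |P.eval (x : ℝ)|) := by
  have : CompactSpace K := isCompact_iff_compactSpace.mp hK
  exact (isCompact_range (by fun_prop)).bddAbove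

theorem coeff_le_two_pow_mul_of_forall_abs_le {n : ℕ} {P : ℝ[X]} {M : ℝ} (hP : P.degree ≤ n)
    (hM : ∀ x ∈ Set.Icc (-1 : ℝ) 1, |P.eval x| ≤ M) : P.coeff n ≤ 2 ^ (n - 1) * M := by
  have M_nonneg : 0 ≤ M := (abs_nonneg _).trans (hM 0 (by norm_num))
  rw [← div_le_iff₀' (by positivity)]
  -- Dividing by some `r > M` rather than by `M` itself also covers `M = 0`.
  refine le_of_forall_gt_imp_ge_of_dense fun r hr => ?_
  have r_pos : 0 < r := M_nonneg.trans_lt hr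
  have degree_le : (C r⁻¹ * P).degree ≤ n := by
    rwa [degree_C_mul (inv_ne_zero r_pos.ne')]
  have abs_le_one : ∀ x ∈ Set.Icc (-1 : ℝ) 1, |(C r⁻¹ * P).eval x| ≤ 1 := fun x hx => by
    rw [eval_C_mul, abs_mul, abs_inv, abs_of_pos r_pos, inv_mul_le_one₀ r_pos]
    exact (hM x hx).trans hr.le
  have coeff_le := Chebyshev.coeff_le_of_forall_abs_le_one degree_le abs_le_one
  rwa [coeff_C_mul, inv_mul_le_iff₀ r_pos, ← div_le_iff₀ (by positivity)] at coeff_le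

theorem abs_coeff_le_two_pow_mul_iSup_abs_eval {n : ℕ} {P : ℝ[X]} (hP : P.degree ≤ n) :
    |P.coeff n| ≤ 2 ^ (n - 1) * ⨆ x : Set.Icc (-1 : ℝ) 1, |P.eval (x : ℝ)| := by
  have abs_eval_le : ∀ x ∈ Set.Icc (-1 : ℝ) 1,
      |P.eval x| ≤ ⨆ x : Set.Icc (-1 : ℝ) 1, |P.eval (x : ℝ)| := fun x hx =>
    le_ciSup (bddAbove_range_abs_eval isCompact_Icc P) ⟨x, hx⟩
  refine abs_le'.mpr ⟨coeff_le_two_pow_mul_of_forall_abs_le hP abs_eval_le, ?_⟩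
  rw [← coeff_neg]
  refine coeff_le_two_pow_mul_of_forall_abs_le (by rwa [degree_neg]) fun x hx => ?_
  rw [eval_neg, abs_neg]
  exact abs_eval_le x hx

theorem two_zpow_le_iSup_abs_eval_of_monic {P : ℝ[X]} (hP : P.Monic) (hdeg : P.natDegree ≠ 0) :
    (2 : ℝ) ^ (1 - (P.natDegree : ℤ)) ≤ ⨆ x : Set.Icc (-1 : ℝ) 1, |P.eval (x : ℝ)| := by
  have one_le := abs_coeff_le_two_pow_mul_iSup_abs_eval P.degree_le_natDegree
  rw [hP.coeff_natDegree, abs_one] at one_le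
  rwa [zpow_one_sub_natCast_eq_inv_pow _ hdeg, inv_le_iff_one_le_mul₀' (by positivity)]

theorem iSup_abs_eval_T_real (n : ℤ) :
    ⨆ x : Set.Icc (-1 : ℝ) 1, |(Chebyshev.T ℝ n).eval (x : ℝ)| = 1 := by
  have : Nonempty (Set.Icc (-1 : ℝ) 1) := ⟨⟨1, by norm_num⟩⟩
  refine le_antisymm
    (ciSup_le fun x => Chebyshev.abs_eval_T_real_le_one n (abs_le.mpr x.2)) ?_
  refine le_ciSup_of_le (bddAbove_range_abs_eval isCompact_Icc _) ⟨1, by norm_num⟩ ?_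
  simp

theorem degree_le_pred_iff_degree_lt {R : Type*} [Semiring R] {p : R[X]} {n : ℕ} (hn : n ≠ 0) :
    p.degree ≤ ((n - 1 : ℕ) : WithBot ℕ) ↔ p.degree < (n : WithBot ℕ) := by
  simp only [degree_le_iff_coeff_zero, degree_lt_iff_coeff_zero, Nat.cast_lt,
    show ∀ m, n - 1 < m ↔ n ≤ m by omega]

section MonicChebyshev

variable {K : Type*} [Field K] [NeZero (2 : K)] {n : ℕ}

theorem monic_C_two_zpow_mul_T (hn : n ≠ 0) :
    (C ((2 : K) ^ (1 - (n : ℤ))) * Chebyshev.T K n).Monic := by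
  apply monic_C_mul_of_mul_leadingCoeff_eq_one
  rw [Chebyshev.leadingCoeff_T, Int.natAbs_natCast, zpow_one_sub_natCast_eq_inv_pow _ hn,
    inv_mul_cancel₀ (pow_ne_zero _ two_ne_zero)]

theorem degree_X_pow_sub_C_two_zpow_mul_T_lt (hn : n ≠ 0) :
    (X ^ n - C ((2 : K) ^ (1 - (n : ℤ))) * Chebyshev.T K n).degree < (n : WithBot ℕ) := by
  have degree_eq : (X ^ n : K[X]).degree =
      (C ((2 : K) ^ (1 - (n : ℤ))) * Chebyshev.T K n).degree := by
    rw [degree_X_pow, degree_C_mul (zpow_ne_zero _ two_ne_zero), Chebyshev.degree_T,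
      Int.natAbs_natCast]
  have leadingCoeff_eq := (monic_X_pow n).leadingCoeff.trans
    (monic_C_two_zpow_mul_T (K := K) hn).leadingCoeff.symm
  simpa only [degree_X_pow] using
    degree_sub_lt_left degree_eq (monic_X_pow n).ne_zero leadingCoeff_eq

end MonicChebyshev

/-- For `n ≥ 1`, every polynomial `q` of degree at most `n - 1` satisfies
`sup_{x ∈ [-1,1]} |x^n - q(x)| ≥ 2^(1-n)`, and this minimum `2^(1-n)` is attained by
`q*(x) = x^n - 2^(1-n) T_n(x)`, a polynomial of degree at most `n - 1`. -/
theorem minimax_monomial (n : ℕ) (hn : 1 ≤ n) :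
    (∀ q : Polynomial ℝ, q.degree ≤ ((n - 1 : ℕ) : WithBot ℕ) →
      (2 : ℝ) ^ (1 - (n : ℤ)) ≤
        ⨆ x : Set.Icc (-1 : ℝ) 1, |(x : ℝ) ^ n - q.eval (x : ℝ)|) ∧
    (Polynomial.X ^ n -
        Polynomial.C ((2 : ℝ) ^ (1 - (n : ℤ))) * Polynomial.Chebyshev.T ℝ (n : ℤ)).degree ≤
      ((n - 1 : ℕ) : WithBot ℕ) ∧
    (⨆ x : Set.Icc (-1 : ℝ) 1,
        |(x : ℝ) ^ n -
          (Polynomial.X ^ n -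
            Polynomial.C ((2 : ℝ) ^ (1 - (n : ℤ))) *
              Polynomial.Chebyshev.T ℝ (n : ℤ)).eval (x : ℝ)|) =
      (2 : ℝ) ^ (1 - (n : ℤ)) := by
  have hn0 : n ≠ 0 := Nat.one_le_iff_ne_zero.mp hn
  simp only [degree_le_pred_iff_degree_lt hn0]
  refine ⟨fun q hq => ?_, degree_X_pow_sub_C_two_zpow_mul_T_lt hn0, ?_⟩
  · have natDegree_eq : (X ^ n - q).natDegree = n := natDegree_eq_of_degree_eq_some <| by
      rw [degree_sub_eq_left_of_degree_lt (by rwa [degree_X_pow]), degree_X_pow]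
    simpa [natDegree_eq] using
      two_zpow_le_iSup_abs_eval_of_monic (monic_X_pow_sub hq) (natDegree_eq.trans_ne hn0)
  · simp only [eval_sub, eval_pow, eval_X, sub_sub_cancel, eval_C_mul, abs_mul]
    rw [← Real.mul_iSup_of_nonneg (abs_nonneg _), iSup_abs_eval_T_real, mul_one,
      abs_of_pos (by positivity)]
end
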